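/- There exists a sequence of transitive carefully synchronizing PFAs on three symbols with shortest carefully synchronizing word length Ω(φ^{n/3}) in the number n of states: there exist a constant c > 0 and an integer N such that for every n ≥ N there is a transitive PFA with n states and an alphabet of 3 symbols which is carefully synchronizing and whose shortest carefully synchronizing word has length at least c·φ^{n/3}, where φ = (1+√5)/2. -/

import Mathlib

/-- One step of a PFA on an `Option` state. -/
def pfaStep {Q σ : Type*} (δ : Q → σ → Option Q) (o : Option Q) (a : σ) : Option Q :=
  o.bind fun q => δ q a

/-- The (partial) state reached from `q` after reading word `w` in the PFA `δ`. -/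
def pfaRun {Q σ : Type*} (δ : Q → σ → Option Q) (q : Q) (w : List σ) : Option Q :=
  w.foldl (pfaStep δ) (some q)

/-- A word `w` is carefully synchronizing for the PFA `δ`. -/
def IsCareSyncWord {Q σ : Type*} (δ : Q → σ → Option Q) (w : List σ) : Prop :=
  ∃ qs : Q, ∀ q : Q, pfaRun δ q w = some qs

/-- A PFA is transitive if every state can be reached from every state by some word. -/
def PFATransitive {Q σ : Type*} (δ : Q → σ → Option Q) : Prop :=
  ∀ q q' : Q, ∃ w : List σ, pfaRun δ q w = some q'

/-!
A cyclic tape of `k` cells carries the digits `0, 1, 2` and an end marker; a state of the PFA is a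
cell together with a symbol, so that a set of states meeting every cell once is a tape. The letters
rotate the tape, carry `2 x ↦ 0 (x + 1)` at a fixed pair of cells, and reset the tape to zeros with
one end marker. Cells can be merged only by a carry into the end marker, which requires the digit
`2` in the cell of highest weight, hence counting up to `2 ^ k` in steps of bounded size. On the
other hand, counting this far is possible and merges the last two cells, and the process can be
repeated with fewer and fewer occupied cells.

This uses `4 * k` states. As many as three transitions into one state can be redirected to copies
of that state, which gives every number `n` of states and the bound `2 ^ (n / 4) / 4`. It exceeds
the required one because `φ ^ 4 < 2 ^ 3`.
-/

section Runs

variable {Q σ ι κ : Type*} {δ : Q → σ → Option Q}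

theorem foldl_pfaStep (o : Option Q) (w : List σ) :
    w.foldl (pfaStep δ) o = o.bind fun q => pfaRun δ q w := by
  cases o with
  | some q => rfl
  | none =>
    induction w with
    | nil => rfl
    | cons _ _ ih => exact ih

theorem pfaRun_cons (q : Q) (a : σ) (w : List σ) :
    pfaRun δ q (a :: w) = (δ q a).bind fun s => pfaRun δ s w :=
  foldl_pfaStep (δ q a) w

theorem pfaRun_append (q : Q) (u v : List σ) :
    pfaRun δ q (u ++ v) = (pfaRun δ q u).bind fun s => pfaRun δ s v := by
  rw [pfaRun, List.foldl_append, foldl_pfaStep]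
  rfl

/-- A single word takes the state `p i` to the state `q i`, for all `i` simultaneously. Constant
families over `Unit` give reachability; `p = id` and constant `q` give careful synchronization. -/
def JointlyReachable (δ : Q → σ → Option Q) (p q : ι → Q) : Prop :=
  ∃ w : List σ, ∀ i, pfaRun δ (p i) w = some (q i)

namespace JointlyReachable

variable {p q r : ι → Q}

theorem refl (p : ι → Q) : JointlyReachable δ p p := ⟨[], fun _ => rfl⟩

theorem trans (hpq : JointlyReachable δ p q) (hqr : JointlyReachable δ q r) :
    JointlyReachable δ p r := by
  obtain ⟨u, hu⟩ := hpq
  obtain ⟨v, hv⟩ := hqr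
  exact ⟨u ++ v, fun i => by rw [pfaRun_append, hu, Option.bind_some, hv]⟩

theorem of_letter (a : σ) (h : ∀ i, δ (p i) a = some (q i)) : JointlyReachable δ p q := ⟨[a], h⟩

theorem comp (h : JointlyReachable δ p q) (g : κ → ι) : JointlyReachable δ (p ∘ g) (q ∘ g) :=
  h.imp fun _ hw i => hw (g i)

end JointlyReachable

end Runs

section Lift

variable {Q Q' σ : Type*} {δ : Q → σ → Option Q} {π : Q' → Q} {g : Q → σ → Option Q'}

/-- The PFA on `Q'` whose transitions from a state depend only on its image under `π`. It is used
with a `g` that lifts the transitions of a PFA on `Q` along `π`, so that `Q'` consists of copies of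
the states in `Q`. -/
def liftPFA (π : Q' → Q) (g : Q → σ → Option Q') (q' : Q') (a : σ) : Option Q' := g (π q') a

theorem map_pfaRun_liftPFA (hg : ∀ q a, (g q a).map π = δ q a) (q' : Q') (w : List σ) :
    (pfaRun (liftPFA π g) q' w).map π = pfaRun δ (π q') w := by
  induction w generalizing q' with
  | nil => rfl
  | cons a w ih =>
    rw [pfaRun_cons, pfaRun_cons, ← hg, liftPFA]
    cases g (π q') a with
    | none => rfl
    | some s => exact ih s

theorem exists_pfaRun_liftPFA_eq_some (hg : ∀ q a, (g q a).map π = δ q a) {q' : Q'} {s : Q}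
    {w : List σ} (h : pfaRun δ (π q') w = some s) :
    ∃ s', pfaRun (liftPFA π g) q' w = some s' ∧ π s' = s := by
  rwa [← map_pfaRun_liftPFA hg, Option.map_eq_some_iff] at h

theorem PFATransitive.liftPFA (hδ : PFATransitive δ) (hg : ∀ q a, (g q a).map π = δ q a)
    (hin : ∀ q', ∃ q a, g q a = some q') : PFATransitive (liftPFA π g) := by
  intro p' q'
  obtain ⟨q, a, hqa⟩ := hin q'
  obtain ⟨w, hw⟩ := hδ (π p') q
  obtain ⟨s', hs', rfl⟩ := exists_pfaRun_liftPFA_eq_some hg hw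
  exact ⟨w ++ [a], by rw [pfaRun_append, hs']; exact hqa⟩

theorem IsCareSyncWord.liftPFA_concat {w : List σ} (hw : IsCareSyncWord δ w)
    (hg : ∀ q a, (g q a).map π = δ q a) {a : σ} (ha : ∀ q, (δ q a).isSome) :
    IsCareSyncWord (liftPFA π g) (w ++ [a]) := by
  obtain ⟨qs, hqs⟩ := hw
  obtain ⟨s, hs⟩ : ∃ s, g qs a = some s := by
    rw [← Option.isSome_iff_exists, ← Option.isSome_map, hg]
    exact ha qs
  refine ⟨s, fun q' => ?_⟩
  obtain ⟨t', ht', rfl⟩ := exists_pfaRun_liftPFA_eq_some hg (hqs (π q'))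
  rw [pfaRun_append, ht']
  exact hs

theorem IsCareSyncWord.of_liftPFA {w : List σ} (hw : IsCareSyncWord (liftPFA π g) w)
    (hg : ∀ q a, (g q a).map π = δ q a) (hπ : Function.Surjective π) : IsCareSyncWord δ w := by
  obtain ⟨qs, hqs⟩ := hw
  refine ⟨π qs, hπ.forall.2 fun q' => ?_⟩
  rw [← map_pfaRun_liftPFA hg, hqs, Option.map_some]

section Redirect

variable [DecidableEq Q] [DecidableEq σ]

/-- The transitions of `δ`, where those in `E` are redirected to new states, one for each. -/
def redirect (δ : Q → σ → Option Q) (E : Finset (Q × σ)) (q : Q) (a : σ) : Option (Q ⊕ E) :=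
  if h : (q, a) ∈ E then some (Sum.inr ⟨(q, a), h⟩) else (δ q a).map Sum.inl

theorem map_redirect {E : Finset (Q × σ)} {q₀ : Q} (hE : ∀ e ∈ E, δ e.1 e.2 = some q₀) (q : Q)
    (a : σ) : (redirect δ E q a).map (Sum.elim id fun _ => q₀) = δ q a := by
  unfold redirect
  split_ifs with h
  · exact (hE _ h).symm
  · simp

theorem exists_redirect_eq_some {E : Finset (Q × σ)}
    (hin : ∀ q, ∃ p a, (p, a) ∉ E ∧ δ p a = some q) (s : Q ⊕ E) :
    ∃ q a, redirect δ E q a = some s := by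
  rcases s with q | ⟨⟨q, a⟩, h⟩
  · obtain ⟨p, a, hE, hpa⟩ := hin q
    exact ⟨p, a, by simp [redirect, hE, hpa]⟩
  · exact ⟨q, a, by simp [redirect, h]⟩

end Redirect

theorem exists_pfa_fin_of_redirect [Fintype Q] {E : Finset (Q × σ)} {q₀ : Q} {n : ℕ}
    (hn : Fintype.card Q + E.card = n) (hE : ∀ e ∈ E, δ e.1 e.2 = some q₀)
    (hin : ∀ q, ∃ p a, (p, a) ∉ E ∧ δ p a = some q) (htrans : PFATransitive δ)
    {a : σ} (ha : ∀ q, (δ q a).isSome) (hsync : ∃ w, IsCareSyncWord δ w) :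
    ∃ δ' : Fin n → σ → Option (Fin n), PFATransitive δ' ∧ (∃ w, IsCareSyncWord δ' w) ∧
      ∀ w, IsCareSyncWord δ' w → IsCareSyncWord δ w := by
  classical
  let e : Q ⊕ E ≃ Fin n := Fintype.equivFinOfCardEq (by simpa using hn)
  let π : Fin n → Q := Sum.elim id (fun _ => q₀) ∘ e.symm
  let g (q : Q) (a : σ) : Option (Fin n) := (redirect δ E q a).map e
  have hg (q a) : (g q a).map π = δ q a := by
    rw [← map_redirect hE, Option.map_map]
    simp [π, Function.comp_assoc]
  have hg_surj (s) : ∃ q a, g q a = some s := by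
    obtain ⟨q, a, h⟩ := exists_redirect_eq_some hin (e.symm s)
    exact ⟨q, a, by simp [g, h]⟩
  have hπ : Function.Surjective π := fun q => ⟨e (Sum.inl q), by simp [π]⟩
  obtain ⟨w, hw⟩ := hsync
  exact ⟨liftPFA π g, htrans.liftPFA hg hg_surj, ⟨_, hw.liftPFA_concat hg ha⟩,
    fun w hw => hw.of_liftPFA hg hπ⟩

end Lift

section Counter

/-- The symbols on the tape of a binary counter: three digits and an end marker. The digit `2`
represents a pending carry. -/
inductive CounterSymbol
  | zero
  | one
  | two
  | marker
  deriving DecidableEq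

namespace CounterSymbol

instance : Fintype CounterSymbol where
  elems := {zero, one, two, marker}
  complete x := by cases x <;> decide

/-- The digit left behind when the carry pending in a cell is passed on; the marker acts as an
inexhaustible source of carries. -/
def passCarry? : CounterSymbol → Option CounterSymbol
  | two => some zero
  | marker => some marker
  | _ => none

/-- The digit obtained when a carry is received. -/
def succ? : CounterSymbol → Option CounterSymbol
  | zero => some one
  | one => some two
  | _ => none

/-- The numerical value of a symbol, which is `0` for the marker. -/
def val : CounterSymbol → ℕ
  | one => 1
  | two => 2
  | _ => 0

theorem passCarry?_eq_some {x y : CounterSymbol} (h : x.passCarry? = some y) :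
    x = two ∧ y = zero ∨ x = marker ∧ y = marker := by
  revert x y
  decide

theorem ne_marker_of_succ?_eq_some {x y : CounterSymbol} (h : x.succ? = some y) :
    x ≠ marker ∧ y ≠ marker := by
  revert x y
  decide

theorem val_of_succ?_eq_some {x y : CounterSymbol} (h : x.succ? = some y) : y.val = x.val + 1 := by
  revert x y
  decide

end CounterSymbol

open CounterSymbol

variable {k : ℕ}

theorem val_neg_one_add_one [NeZero k] : (-1 : ZMod k).val + 1 = k := by
  obtain _ | k := k
  · exact absurd rfl (NeZero.ne 0)
  · rw [ZMod.val_neg_one]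

/-- The carry from cell `m` to cell `m + 1` of a cyclic tape. An end marker in cell `m + 1` is
merged into cell `m`. -/
def carryAt (m : ZMod k) (q : ZMod k × CounterSymbol) : Option (ZMod k × CounterSymbol) :=
  if q.1 = m then q.2.passCarry?.map (m, ·)
  else if q.1 = m + 1 then
    if q.2 = marker then some (m, zero) else q.2.succ?.map (m + 1, ·)
  else some q

/-- The tape with an end marker in cell `m` and zeros elsewhere. -/
def resetTape (m i : ZMod k) : CounterSymbol := if i = m then marker else zero

/-- A binary counter on a cyclic tape with `k` cells: the letters `0`, `1`, `2` rotate the tape,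
carry from cell `0` to cell `1`, and reset the tape with the end marker in cell `0`. -/
def counterPFA (k : ℕ) (q : ZMod k × CounterSymbol) : Fin 3 → Option (ZMod k × CounterSymbol)
  | 0 => some (q.1 + 1, q.2)
  | 1 => carryAt 0 q
  | 2 => some (q.1, resetTape 0 q.1)

/-- The cells of a tape that hold a marker. -/
def markers (f : ZMod k → CounterSymbol) : Set (ZMod k) := {i | f i = marker}

/-- The tape `f` with the symbols in the cells `m` and `m + 1` replaced by `x` and `y`. -/
def writePair (f : ZMod k → CounterSymbol) (m : ZMod k) (x y : CounterSymbol) :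
    ZMod k → CounterSymbol :=
  Function.update (Function.update f m x) (m + 1) y

theorem markers_writePair {f : ZMod k → CounterSymbol} {m : ZMod k} {x y : CounterSymbol}
    (hx : (f m).passCarry? = some x) (hy : (f (m + 1)).succ? = some y) :
    markers (writePair f m x y) = markers f := by
  obtain ⟨hm, hy⟩ := ne_marker_of_succ?_eq_some hy
  ext i
  simp only [markers, writePair, Set.mem_ofPred_eq]
  rcases eq_or_ne i (m + 1) with rfl | h₁
  · simp [hm, hy]
  rcases eq_or_ne i m with rfl | h₀
  · obtain ⟨h, rfl⟩ | ⟨h, rfl⟩ := passCarry?_eq_some hx <;> simp [h, h₁]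
  · simp [h₀, h₁]

theorem carryAt_tape [Nontrivial (ZMod k)] {f : ZMod k → CounterSymbol} {m : ZMod k}
    {x y : CounterSymbol} (hx : (f m).passCarry? = some x) (hy : (f (m + 1)).succ? = some y)
    (i : ZMod k) : carryAt m (i, f i) = some (i, writePair f m x y i) := by
  have hm := (ne_marker_of_succ?_eq_some hy).1
  rcases eq_or_ne i (m + 1) with rfl | h₁
  · simp [carryAt, writePair, hm, hy]
  rcases eq_or_ne i m with rfl | h₀
  · simp [carryAt, writePair, hx]
  · simp [carryAt, writePair, h₀, h₁]

theorem exists_of_forall_isSome_carryAt [Nontrivial (ZMod k)] {f : ZMod k → CounterSymbol}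
    {m : ZMod k} (h : ∀ i, (carryAt m (i, f i)).isSome) :
    (∃ x, (f m).passCarry? = some x) ∧
      (f (m + 1) = marker ∨ ∃ y, (f (m + 1)).succ? = some y) := by
  have h₀ := h m
  have h₁ := h (m + 1)
  simp only [carryAt, if_true, Option.isSome_map, add_eq_left, one_ne_zero, if_false] at h₀ h₁
  refine ⟨Option.isSome_iff_exists.1 h₀, or_iff_not_imp_left.2 fun hm => ?_⟩
  rw [if_neg hm, Option.isSome_map] at h₁
  exact Option.isSome_iff_exists.1 h₁

theorem carryAt_sub (m i : ZMod k) (x : CounterSymbol) :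
    carryAt 0 (i - m, x) = (carryAt m (i, x)).map fun q => (q.1 - m, q.2) := by
  have h₁ : i - m = 0 + 1 ↔ i = m + 1 := by rw [zero_add, sub_eq_iff_eq_add']
  simp only [carryAt, sub_eq_zero, h₁]
  split_ifs
  · simp [Option.map_map, Function.comp_def]
  · simp
  · simp [Option.map_map, Function.comp_def]
  · simp

section Synchronization

variable {ι : Type*} {p q : ι → ZMod k × CounterSymbol}

/-- The counter can turn the tape `f` into the tape `f'`, where the markers and the cells after
cell `j` are the same in both. -/
structure CountsTo (j : ℕ) (f f' : ZMod k → CounterSymbol) : Prop where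
  markers_eq : markers f' = markers f
  eq_of_lt : ∀ i, j < i.val → f' i = f i
  reachable : JointlyReachable (counterPFA k) (fun i => (i, f i)) fun i => (i, f' i)

namespace CountsTo

variable {j l : ℕ} {f g h : ZMod k → CounterSymbol}

theorem refl (j : ℕ) (f : ZMod k → CounterSymbol) : CountsTo j f f :=
  ⟨rfl, fun _ _ => rfl, .refl _⟩

theorem trans (hfg : CountsTo j f g) (hgh : CountsTo j g h) : CountsTo j f h :=
  ⟨hgh.markers_eq.trans hfg.markers_eq,
    fun i hi => (hgh.eq_of_lt i hi).trans (hfg.eq_of_lt i hi), hfg.reachable.trans hgh.reachable⟩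

theorem mono (hjl : j ≤ l) (hfg : CountsTo j f g) : CountsTo l f g :=
  ⟨hfg.markers_eq, fun i hi => hfg.eq_of_lt i (hjl.trans_lt hi), hfg.reachable⟩

theorem exists_two_of_succ? {c : ZMod k}
    (hsucc : ∀ g, markers g = markers f → ∀ y, (g c).succ? = some y →
      ∃ g', CountsTo j g g' ∧ g' c = y) (hc : f c ≠ marker) :
    ∃ g, CountsTo j f g ∧ g c = two := by
  have of_one (g) (hg : CountsTo j f g) (h : g c = one) : ∃ g, CountsTo j f g ∧ g c = two := by
    obtain ⟨g', hg', hc'⟩ := hsucc g hg.markers_eq two (by rw [h]; rfl)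
    exact ⟨g', hg.trans hg', hc'⟩
  cases h : f c with
  | zero =>
    obtain ⟨g, hg, hc'⟩ := hsucc f rfl one (by rw [h]; rfl)
    exact of_one g hg hc'
  | one => exact of_one f (refl j f) h
  | two => exact ⟨f, refl j f, h⟩
  | marker => exact absurd h hc

end CountsTo

variable [NeZero k]

theorem jointlyReachable_rotate (m : ZMod k) (p : ι → ZMod k × CounterSymbol) :
    JointlyReachable (counterPFA k) p fun i => ((p i).1 + m, (p i).2) := by
  suffices ∀ l : ℕ, JointlyReachable (counterPFA k) p fun i => ((p i).1 + l, (p i).2) by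
    simpa using this m.val
  intro l
  induction l with
  | zero => simpa using JointlyReachable.refl p
  | succ l ih => exact ih.trans (.of_letter 0 fun i => by simp [counterPFA, add_assoc])

theorem jointlyReachable_of_shifted_letter (a : Fin 3) (m : ZMod k)
    (h : ∀ i, counterPFA k ((p i).1 - m, (p i).2) a = some ((q i).1 - m, (q i).2)) :
    JointlyReachable (counterPFA k) p q := by
  have hrotate := (jointlyReachable_rotate (-m) p).trans
    (.of_letter a (q := fun i => ((q i).1 - m, (q i).2)) (by simpa [← sub_eq_add_neg] using h))
  simpa using hrotate.trans (jointlyReachable_rotate m _)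

theorem jointlyReachable_of_carryAt (m : ZMod k) (h : ∀ i, carryAt m (p i) = some (q i)) :
    JointlyReachable (counterPFA k) p q :=
  jointlyReachable_of_shifted_letter 1 m fun i => by
    rw [counterPFA, carryAt_sub, h, Option.map_some]

theorem jointlyReachable_of_resetTape (m : ZMod k)
    (h : ∀ i, ((p i).1, resetTape m (p i).1) = q i) : JointlyReachable (counterPFA k) p q :=
  jointlyReachable_of_shifted_letter 2 m fun i => by
    simp [← h, counterPFA, resetTape, sub_eq_zero]

theorem transitive_counterPFA [Nontrivial (ZMod k)] : PFATransitive (counterPFA k) := by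
  let R (p q : ZMod k × CounterSymbol) : Prop :=
    JointlyReachable (counterPFA k) (fun _ : Unit => p) fun _ => q
  have rotate (i j : ZMod k) (x : CounterSymbol) : R (i, x) (j, x) := by
    simpa using jointlyReachable_rotate (j - i) fun _ : Unit => (i, x)
  have to_marker (j : ZMod k) (x : CounterSymbol) : R (j, x) (j, marker) :=
    jointlyReachable_of_resetTape j fun _ => by simp [resetTape]
  have to_zero (j : ZMod k) (x : CounterSymbol) : R (j, x) (j, zero) :=
    jointlyReachable_of_resetTape (j + 1) fun _ => by simp [resetTape]
  have ne_pred (j : ZMod k) : j ≠ j - 1 := fun h => one_ne_zero (sub_eq_self.1 h.symm)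
  have zero_to_one (j : ZMod k) : R (j, zero) (j, one) :=
    jointlyReachable_of_carryAt (j - 1) fun _ => by simp [carryAt, succ?, ne_pred]
  have one_to_two (j : ZMod k) : R (j, one) (j, two) :=
    jointlyReachable_of_carryAt (j - 1) fun _ => by simp [carryAt, succ?, ne_pred]
  rintro ⟨i, x⟩ ⟨j, y⟩
  suffices R (j, x) (j, y) from ((rotate i j x).trans this).imp fun _ hw => hw ()
  cases y with
  | zero => exact to_zero j x
  | one => exact (to_zero j x).trans (zero_to_one j)
  | two => exact ((to_zero j x).trans (zero_to_one j)).trans (one_to_two j)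
  | marker => exact to_marker j x

theorem countsTo_writePair [Nontrivial (ZMod k)] {j : ℕ} {f : ZMod k → CounterSymbol}
    {m : ZMod k} {x y : CounterSymbol} (hx : (f m).passCarry? = some x)
    (hy : (f (m + 1)).succ? = some y) (hj : (m + 1).val ≤ j) (hm : f m ≠ x → m.val ≤ j) :
    CountsTo j f (writePair f m x y) where
  markers_eq := markers_writePair hx hy
  eq_of_lt i hi := by
    have h₁ : i ≠ m + 1 := fun h => by subst h; omega
    rw [writePair, Function.update_of_ne h₁]
    rcases eq_or_ne i m with rfl | h₀
    · rw [Function.update_self]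
      exact (not_imp_comm.1 hm (by omega)).symm
    · rw [Function.update_of_ne h₀]
  reachable := jointlyReachable_of_carryAt m (carryAt_tape hx hy)

theorem exists_countsTo_two [Nontrivial (ZMod k)] {j t : ℕ} (hjt : j < t) (htk : t < k)
    {f : ZMod k → CounterSymbol} (hf : markers f = {i | t ≤ i.val}) :
    ∃ g, CountsTo j f g ∧ g j = two := by
  have hval {i : ℕ} (hi : i ≤ t) : (i : ZMod k).val = i := ZMod.val_cast_of_lt (by omega)
  have hdigit {f : ZMod k → CounterSymbol} (hf : markers f = {i | t ≤ i.val}) {i : ℕ}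
      (hi : i < t) : f i ≠ marker := fun h => by
    have : t ≤ (i : ZMod k).val := hf.le h
    rw [hval hi.le] at this
    omega
  induction j generalizing f with
  | zero =>
    -- The carries into cell `0` come from the marker in the last cell.
    refine CountsTo.exists_two_of_succ? (fun g hg y hy => ?_) (hdigit hf hjt)
    have hlast : g (-1) = marker := by
      have hlast_val := val_neg_one_add_one (k := k)
      exact (hg.trans hf).ge (show t ≤ (-1 : ZMod k).val by omega)
    refine ⟨writePair g (-1) marker y, countsTo_writePair (by rw [hlast]; rfl) ?_ (by simp) ?_, ?_⟩
    · simpa using hy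
    · exact fun h => absurd hlast h
    · simp [writePair]
  | succ j ih =>
    refine CountsTo.exists_two_of_succ? (fun g hg y hy => ?_) (hdigit hf hjt)
    obtain ⟨g', hg', hj⟩ := ih (by omega) (hg.trans hf)
    rw [← hg'.eq_of_lt _ (by rw [hval hjt.le]; omega), Nat.cast_succ] at hy
    refine ⟨writePair g' j zero y, (hg'.mono j.le_succ).trans
      (countsTo_writePair (by rw [hj]; rfl) hy ?_ fun _ => ?_), by simp [writePair]⟩
    · rw [← Nat.cast_succ, hval hjt.le]
    · rw [hval (by omega)]
      omega

theorem exists_carryAt_eq_some_of_two {t : ℕ} (htk : t + 1 < k) {f : ZMod k → CounterSymbol}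
    (hf : markers f = {i | t + 1 ≤ i.val}) (htwo : f t = two) {i : ZMod k} (hi : i.val ≤ t + 1) :
    ∃ s, carryAt (t : ZMod k) (i, f i) = some s ∧ s.1.val ≤ t := by
  have hval : (t : ZMod k).val = t := ZMod.val_cast_of_lt (by omega)
  have hval' : (t + 1 : ZMod k).val = t + 1 := by
    rw [← Nat.cast_succ, ZMod.val_cast_of_lt htk]
  rcases eq_or_ne i t with rfl | h₀
  · exact ⟨(t, zero), by simp [carryAt, htwo, passCarry?], hval.le⟩
  rcases eq_or_ne i (t + 1) with rfl | h₁
  · have hmarker : f (t + 1) = marker := hf.ge hval'.ge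
    exact ⟨(t, zero), by simp [carryAt, h₀, hmarker], hval.le⟩
  · refine ⟨(i, f i), by simp [carryAt, h₀, h₁], ?_⟩
    have : i.val ≠ t + 1 := fun h => h₁ (ZMod.val_injective k (h.trans hval'.symm))
    exact Nat.le_of_lt_succ (lt_of_le_of_ne hi this)

theorem exists_jointlyReachable_val_le [Nontrivial (ZMod k)] {t : ℕ} (htk : t + 1 < k)
    (hp : ∀ i, (p i).1.val ≤ t + 1) :
    ∃ q, JointlyReachable (counterPFA k) p q ∧ ∀ i, (q i).1.val ≤ t := by
  let f (i : ZMod k) : CounterSymbol := if t + 1 ≤ i.val then marker else zero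
  have hf : markers f = {i | t + 1 ≤ i.val} := by ext i; simp [markers, f]
  have hreset (i) : resetTape ((t + 1 : ℕ) : ZMod k) (p i).1 = f (p i).1 := by
    have : (p i).1 = ((t + 1 : ℕ) : ZMod k) ↔ t + 1 ≤ (p i).1.val := by
      rw [← (ZMod.val_injective k).eq_iff, ZMod.val_cast_of_lt htk]
      exact (hp i).ge_iff_eq.symm
    simp only [resetTape, f, this]
  obtain ⟨g, hfg, htwo⟩ := exists_countsTo_two t.lt_succ_self htk hf
  choose q hq hqt using fun i =>
    exists_carryAt_eq_some_of_two htk (hfg.markers_eq.trans hf) htwo (hp i)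
  have hpf : JointlyReachable (counterPFA k) p fun i => ((p i).1, f (p i).1) :=
    jointlyReachable_of_resetTape ((t + 1 : ℕ) : ZMod k) fun i => by rw [hreset]
  exact ⟨q, (hpf.trans (hfg.reachable.comp fun i => (p i).1)).trans
    (jointlyReachable_of_carryAt _ hq), hqt⟩

theorem exists_isCareSyncWord_counterPFA [Nontrivial (ZMod k)] :
    ∃ w, IsCareSyncWord (counterPFA k) w := by
  have merge (t : ℕ) (ht : t < k) (p : ZMod k × CounterSymbol → ZMod k × CounterSymbol)
      (hp : ∀ i, (p i).1.val ≤ t) :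
      JointlyReachable (counterPFA k) p fun _ => (0, marker) := by
    induction t generalizing p with
    | zero =>
      have hp (i) : (p i).1 = 0 := (ZMod.val_eq_zero _).1 (Nat.le_zero.1 (hp i))
      exact jointlyReachable_of_resetTape 0 fun i => by simp [hp, resetTape]
    | succ t ih =>
      obtain ⟨q, hpq, hq⟩ := exists_jointlyReachable_val_le ht hp
      exact hpq.trans (ih (by omega) q hq)
  have hk : 0 < k := Nat.pos_of_neZero k
  obtain ⟨w, hw⟩ := merge (k - 1) (by omega) id fun i => Nat.le_sub_one_of_lt i.1.val_lt
  exact ⟨w, (0, marker), hw⟩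

end Synchronization

section LowerBound

theorem two_pow_val_add_one_le (i : ZMod k) : 2 ^ (i + 1).val ≤ 2 * 2 ^ i.val := by
  rw [← pow_succ']
  refine Nat.pow_le_pow_right two_pos ((ZMod.val_add_le i 1).trans ?_)
  rw [ZMod.val_one_eq_one_mod]
  exact Nat.add_le_add_left (Nat.mod_le 1 k) _

variable [NeZero k] {f : ZMod k → CounterSymbol} {p : ZMod k}

/-- The number written on the tape `f` when the end marker is in cell `p`. The cell after the
marker has weight `2`, since the weight `1` belongs to the marker itself. -/
def tapeVal (f : ZMod k → CounterSymbol) (p : ZMod k) : ℕ := ∑ i, (f i).val * 2 ^ (i - p).val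

theorem tapeVal_rotate (f : ZMod k → CounterSymbol) (p : ZMod k) :
    tapeVal (fun i => f (i - 1)) (p + 1) = tapeVal f p := by
  unfold tapeVal
  rw [← Equiv.sum_comp (Equiv.addRight (1 : ZMod k))]
  simp

theorem tapeVal_resetTape (m p : ZMod k) : tapeVal (resetTape m) p = 0 :=
  Finset.sum_eq_zero fun i _ => by by_cases h : i = m <;> simp [resetTape, h, CounterSymbol.val]

theorem tapeVal_update (f : ZMod k → CounterSymbol) (p i : ZMod k) (x : CounterSymbol) :
    tapeVal (Function.update f i x) p + (f i).val * 2 ^ (i - p).val =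
      tapeVal f p + x.val * 2 ^ (i - p).val := by
  unfold tapeVal
  rw [← Finset.add_sum_erase _ _ (Finset.mem_univ i),
    ← Finset.add_sum_erase _ (fun j => (f j).val * 2 ^ (j - p).val) (Finset.mem_univ i),
    Finset.sum_congr rfl fun j hj => by rw [Function.update_of_ne (Finset.ne_of_mem_erase hj)],
    Function.update_self]
  ring

theorem two_pow_le_tapeVal (h : f (p - 1) = two) : 2 ^ k ≤ tapeVal f p := by
  calc 2 ^ k = 2 * 2 ^ (-1 : ZMod k).val := by rw [← pow_succ', val_neg_one_add_one]
    _ = (f (p - 1)).val * 2 ^ (p - 1 - p).val := by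
        rw [h, sub_sub_cancel_left]
        rfl
    _ ≤ tapeVal f p := Finset.single_le_sum (f := fun i => (f i).val * 2 ^ (i - p).val)
        (fun _ _ => Nat.zero_le _) (Finset.mem_univ _)

theorem tapeVal_writePair_le [Nontrivial (ZMod k)] (hf : markers f = {p}) {m : ZMod k}
    {x y : CounterSymbol} (hx : (f m).passCarry? = some x) (hy : (f (m + 1)).succ? = some y) :
    tapeVal (writePair f m x y) p ≤ tapeVal f p + 2 := by
  have hupdate₀ := tapeVal_update f p m x
  have hupdate₁ := tapeVal_update (Function.update f m x) p (m + 1) y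
  rw [Function.update_of_ne (by simp), val_of_succ?_eq_some hy, add_one_mul] at hupdate₁
  have hweight := two_pow_val_add_one_le (m - p)
  rw [sub_add_eq_add_sub] at hweight
  unfold writePair
  obtain ⟨hm, rfl⟩ | ⟨hm, rfl⟩ := passCarry?_eq_some hx
  · simp only [hm, CounterSymbol.val] at hupdate₀
    omega
  · obtain rfl : m = p := hf.le hm
    simp only [hm, CounterSymbol.val] at hupdate₀
    rw [sub_self, ZMod.val_zero, pow_zero] at hweight
    omega

theorem exists_carryAt_tape [Nontrivial (ZMod k)] (hf : markers f = {p})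
    (hlt : tapeVal f p < 2 ^ k) {m : ZMod k} (hdef : ∀ i, (carryAt m (i, f i)).isSome) :
    ∃ f', markers f' = {p} ∧ tapeVal f' p ≤ tapeVal f p + 2 ∧
      ∀ i, carryAt m (i, f i) = some (i, f' i) := by
  obtain ⟨⟨x, hx⟩, hmarker | ⟨y, hy⟩⟩ := exists_of_forall_isSome_carryAt hdef
  · -- The marker receives no carry, as the value of the tape would have reached `2 ^ k`.
    obtain rfl : m + 1 = p := hf.le hmarker
    obtain ⟨htwo, -⟩ | ⟨hm, -⟩ := passCarry?_eq_some hx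
    · exact absurd (two_pow_le_tapeVal (by rwa [add_sub_cancel_right])) hlt.not_ge
    · have : m = m + 1 := hf.le hm
      simp at this
  · exact ⟨writePair f m x y, (markers_writePair hx hy).trans hf, tapeVal_writePair_le hf hx hy,
      carryAt_tape hx hy⟩

theorem exists_tape_of_letter [Nontrivial (ZMod k)] (hf : markers f = {p})
    (hlt : tapeVal f p < 2 ^ k) {a : Fin 3} (hdef : ∀ i, (counterPFA k (i, f i) a).isSome) :
    ∃ f' p', markers f' = {p'} ∧ tapeVal f' p' ≤ tapeVal f p + 2 ∧
      ∀ i, ∃ j, counterPFA k (j, f j) a = some (i, f' i) := by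
  match a with
  | 0 =>
    refine ⟨fun i => f (i - 1), p + 1, ?_, ?_, fun i => ⟨i - 1, by simp [counterPFA]⟩⟩
    · ext i
      exact (Set.ext_iff.1 hf (i - 1)).trans sub_eq_iff_eq_add
    · rw [tapeVal_rotate]
      omega
  | 1 =>
    obtain ⟨f', hf', hval, hcarry⟩ := exists_carryAt_tape hf hlt hdef
    exact ⟨f', p, hf', hval, fun i => ⟨i, hcarry i⟩⟩
  | 2 =>
    refine ⟨resetTape 0, 0, ?_, ?_, fun i => ⟨i, rfl⟩⟩
    · ext i
      simp [markers, resetTape]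
    · rw [tapeVal_resetTape]
      omega

theorem two_pow_le_tapeVal_add_length [Nontrivial (ZMod k)] (hf : markers f = {p})
    {w : List (Fin 3)} {qs : ZMod k × CounterSymbol}
    (hw : ∀ i, pfaRun (counterPFA k) (i, f i) w = some qs) :
    2 ^ k ≤ tapeVal f p + 2 * w.length := by
  induction w generalizing f p with
  | nil =>
    have hcell (i) : i = qs.1 := congrArg Prod.fst (Option.some_inj.1 (hw i))
    exact absurd ((hcell 0).trans (hcell 1).symm) zero_ne_one
  | cons a w ih =>
    by_contra! hlt
    rw [List.length_cons] at hlt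
    simp only [pfaRun_cons] at hw
    obtain ⟨f', p', hf', hval, hstep⟩ := exists_tape_of_letter hf (by omega) (a := a) fun i =>
      Option.isSome_of_isSome_bind (Option.isSome_of_eq_some (hw i))
    have hle := ih hf' fun i => by
      obtain ⟨j, hj⟩ := hstep i
      rw [← hw j, hj, Option.bind_some]
    omega

theorem two_pow_le_length_of_isCareSyncWord_counterPFA [Nontrivial (ZMod k)] {w : List (Fin 3)}
    (hw : IsCareSyncWord (counterPFA k) w) : 2 ^ k ≤ 2 * w.length := by
  obtain ⟨qs, hqs⟩ := hw
  have hmarkers : markers (resetTape (0 : ZMod k)) = {0} := by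
    ext i
    simp [markers, resetTape]
  simpa [tapeVal_resetTape] using two_pow_le_tapeVal_add_length hmarkers fun i => hqs _

end LowerBound

theorem exists_pfa_fin_of_counterPFA [NeZero k] [Nontrivial (ZMod k)] {s : ℕ} (hs : s < 4) :
    ∃ δ : Fin (4 * k + s) → Fin 3 → Option (Fin (4 * k + s)),
      PFATransitive δ ∧ (∃ w : List (Fin 3), IsCareSyncWord δ w) ∧
      ∀ w : List (Fin 3), IsCareSyncWord δ w → 2 ^ k ≤ 2 * w.length := by
  have hcard : Fintype.card CounterSymbol = 4 := rfl
  obtain ⟨A, -, hA⟩ :=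
    Finset.exists_subset_card_eq (s := (Finset.univ : Finset CounterSymbol)) (hs.le.trans hcard.ge)
  -- The resets of cell `0` all lead to the same state.
  let E : Finset ((ZMod k × CounterSymbol) × Fin 3) := ({0} ×ˢ A) ×ˢ {2}
  obtain ⟨δ, htrans, hsync, hδ⟩ := exists_pfa_fin_of_redirect (δ := counterPFA k) (E := E)
    (q₀ := (0, marker)) (n := 4 * k + s) (a := 0)
    (by simp [E, hA, hcard, ZMod.card, mul_comm]) (by simp [E, counterPFA, resetTape])
    (fun q => ⟨(q.1 - 1, q.2), 0, by simp [E], by simp [counterPFA]⟩)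
    transitive_counterPFA (fun _ => rfl) exists_isCareSyncWord_counterPFA
  exact ⟨δ, htrans, hsync, fun w hw => two_pow_le_length_of_isCareSyncWord_counterPFA (hδ w hw)⟩

end Counter

theorem goldenRatio_rpow_div_three_le {x : ℝ} (hx : 0 ≤ x) :
    Real.goldenRatio ^ (x / 3) ≤ 2 ^ (x / 4) := by
  have hφ := Real.goldenRatio_pos
  have hpow : Real.goldenRatio ^ 4 ≤ 2 ^ 3 := by
    calc Real.goldenRatio ^ 4 = (Real.goldenRatio ^ 2) ^ 2 := by ring
      _ = 3 * Real.goldenRatio + 2 := by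
          rw [Real.goldenRatio_sq]
          linear_combination Real.goldenRatio_sq
      _ ≤ 2 ^ 3 := by linarith [Real.goldenRatio_lt_two]
  calc Real.goldenRatio ^ (x / 3) = (Real.goldenRatio ^ (4 : ℝ)) ^ (x / 12) := by
        rw [← Real.rpow_mul hφ.le]
        ring_nf
    _ ≤ ((2 : ℝ) ^ (3 : ℝ)) ^ (x / 12) := by
        gcongr
        exact_mod_cast hpow
    _ = 2 ^ (x / 4) := by
        rw [← Real.rpow_mul zero_le_two]
        ring_nf

theorem exists_ternary_transitive_pfa_golden_general {n : ℕ} (hn : 8 ≤ n) :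
    ∃ δ : Fin n → Fin 3 → Option (Fin n),
      PFATransitive δ ∧ (∃ w : List (Fin 3), IsCareSyncWord δ w) ∧
      ∀ w : List (Fin 3), IsCareSyncWord δ w → (2 : ℝ) ^ ((n : ℝ) / 4) ≤ 4 * w.length := by
  obtain ⟨k, s, hs, rfl⟩ : ∃ k s, s < 4 ∧ n = 4 * k + s :=
    ⟨n / 4, n % 4, Nat.mod_lt n four_pos, (Nat.div_add_mod n 4).symm⟩
  have : NeZero k := ⟨by omega⟩
  have : Fact (1 < k) := ⟨by omega⟩
  obtain ⟨δ, htrans, hsync, hlen⟩ := exists_pfa_fin_of_counterPFA (k := k) hs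
  refine ⟨δ, htrans, hsync, fun w hw => ?_⟩
  have hexp : ((4 * k + s : ℕ) : ℝ) / 4 ≤ (k + 1 : ℕ) := by
    have : (s : ℝ) ≤ 4 := by exact_mod_cast hs.le
    push_cast
    linarith
  calc (2 : ℝ) ^ (((4 * k + s : ℕ) : ℝ) / 4) ≤ 2 ^ ((k + 1 : ℕ) : ℝ) :=
        Real.rpow_le_rpow_of_exponent_le one_le_two hexp
    _ = 2 * 2 ^ k := by rw [Real.rpow_natCast, pow_succ']
    _ ≤ 2 * (2 * w.length) := by gcongr; exact_mod_cast hlen w hw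
    _ = 4 * w.length := by ring

/-- There is a sequence of transitive carefully synchronizing PFAs on three symbols with
`n` states and shortest carefully synchronizing word length `Ω(φ^{n/3})`,
where `φ = (1+√5)/2` is the golden ratio. -/
theorem exists_ternary_transitive_pfa_golden : ∃ c : ℝ, 0 < c ∧ ∃ N : ℕ, ∀ n : ℕ, N ≤ n →
    ∃ δ : Fin n → Fin 3 → Option (Fin n),
      PFATransitive δ ∧ (∃ w : List (Fin 3), IsCareSyncWord δ w) ∧
      ∀ w : List (Fin 3), IsCareSyncWord δ w →
        c * ((1 + Real.sqrt 5) / 2) ^ ((n : ℝ) / 3) ≤ (w.length : ℝ) := by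
  refine ⟨1 / 4, by norm_num, 8, fun n hn => ?_⟩
  obtain ⟨δ, htrans, hsync, hlen⟩ := exists_ternary_transitive_pfa_golden_general hn
  refine ⟨δ, htrans, hsync, fun w hw => ?_⟩
  have hφ := (goldenRatio_rpow_div_three_le n.cast_nonneg).trans (hlen w hw)
  rw [Real.goldenRatio] at hφ
  linarith
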